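/- Let M = (S, A, P, R, H, μ) be a finite MDP satisfying the bounded total reward assumption, let π be a (possibly non-stationary) deterministic policy, and let 0 < ε ≤ 1/2. For each (s, a) ∈ S × A define m̄(s, a) = Q^π_{ε/(12|S||A|)}(s, a). Let M̂ = (S, A, P̂, R̂, H, μ̂) be another MDP. If for all (s, a, s′) ∈ S × A × S with m̄(s, a) ≥ 1 we have |P̂(s′|s,a) − P(s′|s,a)| ≤ (ε/(96|S|²|A|)) · max(√(ε·P(s′|s,a)/(72·m̄(s,a)·|S||A|)), ε/(72·m̄(s,a)·|S||A|)) and |E[R̂(s,a)] − E[R(s,a)]| ≤ (ε/(24|S||A|)) · max(√(E[(R(s,a))²]/m̄(s,a)), 1/m̄(s,a)), and for all s ∈ S we have |μ(s) − μ̂(s)| ≤ ε/(6|S|), then V^π_{M̂,H} ≥ V^π_{M,H} − ε. -/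

import Mathlib

open Finset MeasureTheory

/-- Extend a trajectory `(s_0, …, s_H)` to a function `ℕ → S` (constant after time `H`). -/
def extT {S : Type} (H : ℕ) (T : Fin (H + 1) → S) : ℕ → S :=
  fun n => T ⟨min n H, Nat.lt_succ_of_le (Nat.min_le_right n H)⟩

/-- Probability of the trajectory with state sequence `f` under the (possibly non-stationary)
deterministic policy `π`: `p(T, M, π) = μ(s_0) · ∏_{h<H} P(s_{h+1} ∣ s_h, π_h(s_h))`. -/
noncomputable def trajP {S A : Type} (μ : S → ℝ) (P : S → A → S → ℝ)
    (π : ℕ → S → A) (H : ℕ) (f : ℕ → S) : ℝ :=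
  μ (f 0) * ∏ h ∈ Finset.range H, P (f h) (π h (f h)) (f (h + 1))

/-- Number of times the state-action pair `z` is visited during the first `K` steps of the
trajectory with state sequence `f`, when actions are chosen by the policy `π`. -/
def nVisits {S A : Type} [DecidableEq S] [DecidableEq A] (π : ℕ → S → A) (K : ℕ)
    (z : S × A) (f : ℕ → S) : ℕ :=
  ∑ h ∈ Finset.range K, if (f h, π h (f h)) = z then 1 else 0

/-- The `d`-quantile `Q_d(X) = sup {x ∣ Pr[X ≥ x] ≥ d}` of the random variable `X` of the random
trajectory induced by executing the policy `π` in the `H`-horizon MDP `(μ, P)`. -/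
noncomputable def quantNS {S A : Type} [Fintype S] (μ : S → ℝ) (P : S → A → S → ℝ)
    (π : ℕ → S → A) (H : ℕ) (X : (ℕ → S) → ℝ) (d : ℝ) : ℝ :=
  sSup {x : ℝ | d ≤ ∑ T : Fin (H + 1) → S,
    if x ≤ X (extT H T) then trajP μ P π H (extT H T) else 0}

/-- Value of a (possibly non-stationary) deterministic policy `π` in the `H`-horizon MDP:
`V^π = Σ_{T compatible with π} p(T, M, π) · Σ_{h<H} E[R(s_h, a_h)]`. -/
noncomputable def valNS {S A : Type} [Fintype S] (μ : S → ℝ) (P : S → A → S → ℝ)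
    (Rmean : S → A → ℝ) (π : ℕ → S → A) (H : ℕ) : ℝ :=
  ∑ T : Fin (H + 1) → S,
    trajP μ P π H (extT H T) *
      ∑ h ∈ Finset.range H, Rmean (extT H T h) (π h (extT H T h))

/-! Under the budget `m̄`, each state-action pair is visited more than `m̄` times with
probability at most the quantile level, so up to a small loss one may restrict to trajectories
within budget. On these the squared Hellinger distance between the two trajectory laws is
controlled by the sum of the one-step squared Hellinger distances along the trajectory: it
tensorizes additively, whereas a step-by-step `ℓ¹` comparison would lose a factor of the
horizon. Each pair contributes at most `m̄` times its one-step distance, which closeness makes of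
order `(ε / |S||A|)²`. By Cauchy–Schwarz the `ℓ¹` distance of the laws is then of order `ε`, and
since the total reward is at most `1`, so is the loss in value. Different initial distributions
are handled by starting both chains from the subprobability `μ ⊓ μ̂`. -/

section Hellinger

variable {ι : Type*} [Fintype ι]

/-- The squared Hellinger distance between two families of nonnegative weights, without the
normalizing factor `1 / 2`. -/
noncomputable def hellingerSq (p q : ι → ℝ) : ℝ :=
  ∑ i, (√(p i) - √(q i)) ^ 2

lemma hellingerSq_nonneg (p q : ι → ℝ) : 0 ≤ hellingerSq p q :=
  sum_nonneg fun _ _ => sq_nonneg _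

lemma hellingerSq_const_mul {p q : ι → ℝ} (hp : p ∈ stdSimplex ℝ ι) (hq : q ∈ stdSimplex ℝ ι)
    {x y : ℝ} (hx : 0 ≤ x) (hy : 0 ≤ y) :
    hellingerSq (fun i => x * p i) (fun i => y * q i) =
      (√x - √y) ^ 2 + √x * √y * hellingerSq p q := by
  have hterm (i : ι) : (√(x * p i) - √(y * q i)) ^ 2 =
      (x - √x * √y) * p i + (y - √x * √y) * q i + √x * √y * (√(p i) - √(q i)) ^ 2 := by
    rw [Real.sqrt_mul hx, Real.sqrt_mul hy]
    linear_combination (√(p i)) ^ 2 * Real.sq_sqrt hx + (√(q i)) ^ 2 * Real.sq_sqrt hy +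
      (x - √x * √y) * Real.sq_sqrt (hp.1 i) + (y - √x * √y) * Real.sq_sqrt (hq.1 i)
  simp_rw [hellingerSq, hterm, sum_add_distrib, ← mul_sum, hp.2, hq.2]
  linear_combination -Real.sq_sqrt hx - Real.sq_sqrt hy

lemma sqrt_mul_sqrt_le_add_div_two {x y : ℝ} (hx : 0 ≤ x) (hy : 0 ≤ y) :
    √x * √y ≤ (x + y) / 2 := by
  linarith [two_mul_le_add_sq √x √y, Real.sq_sqrt hx, Real.sq_sqrt hy]

lemma abs_sub_eq_abs_sqrt_sub_mul {p q : ℝ} (hp : 0 ≤ p) (hq : 0 ≤ q) :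
    |p - q| = |√p - √q| * (√p + √q) := by
  rw [← abs_of_nonneg (add_nonneg (Real.sqrt_nonneg p) (Real.sqrt_nonneg q)), ← abs_mul]
  congr 1
  linear_combination Real.sq_sqrt hq - Real.sq_sqrt hp

lemma sum_abs_sub_le_sqrt_hellingerSq {p q : ι → ℝ} (hp : ∀ i, 0 ≤ p i) (hq : ∀ i, 0 ≤ q i) :
    ∑ i, |p i - q i| ≤ √(hellingerSq p q) * √(2 * (∑ i, p i + ∑ i, q i)) := by
  have hsum (i : ι) : (√(p i) + √(q i)) ^ 2 ≤ 2 * (p i + q i) := by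
    linarith [add_sq_le (a := √(p i)) (b := √(q i)), Real.sq_sqrt (hp i), Real.sq_sqrt (hq i)]
  calc ∑ i, |p i - q i|
      = ∑ i, |√(p i) - √(q i)| * (√(p i) + √(q i)) :=
        sum_congr rfl fun i _ => abs_sub_eq_abs_sqrt_sub_mul (hp i) (hq i)
    _ ≤ √(∑ i, |√(p i) - √(q i)| ^ 2) * √(∑ i, (√(p i) + √(q i)) ^ 2) :=
        Real.sum_mul_le_sqrt_mul_sqrt _ _ _
    _ ≤ √(hellingerSq p q) * √(2 * (∑ i, p i + ∑ i, q i)) := by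
        simp_rw [sq_abs, ← sum_add_distrib, mul_sum]
        exact mul_le_mul_of_nonneg_left (Real.sqrt_le_sqrt (sum_le_sum fun i _ => hsum i))
          (Real.sqrt_nonneg _)

lemma sq_sqrt_sub_sqrt_le {p q c η : ℝ} (hp : 0 ≤ p) (hq : 0 ≤ q) (hc : 0 < c) (hη0 : 0 ≤ η)
    (hη1 : η ≤ 1) (h : |p - q| ≤ η * max √(p * c) c) : (√p - √q) ^ 2 ≤ η * c := by
  have hsp := Real.sqrt_nonneg p
  have hsq := Real.sqrt_nonneg q
  rcases lt_or_ge p c with hpc | hcp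
  · have hmax : max √(p * c) c = c :=
      max_eq_right ((Real.sqrt_le_left hc.le).2 (by nlinarith))
    calc (√p - √q) ^ 2 = |√p - √q| * |√p - √q| := by rw [← sq_abs, sq]
      _ ≤ |√p - √q| * (√p + √q) :=
        mul_le_mul_of_nonneg_left (abs_le.2 ⟨by linarith, by linarith⟩) (abs_nonneg _)
      _ = |p - q| := (abs_sub_eq_abs_sqrt_sub_mul hp hq).symm
      _ ≤ η * c := by rwa [hmax] at h
  · have hmax : max √(p * c) c = √p * √c := by
      rw [max_eq_left (Real.le_sqrt_of_sq_le (by nlinarith)), Real.sqrt_mul hp]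
    have habs : |√p - √q| ≤ η * √c := by
      refine le_of_mul_le_mul_right ?_ (Real.sqrt_pos.2 (hc.trans_le hcp))
      calc |√p - √q| * √p ≤ |√p - √q| * (√p + √q) := by gcongr; linarith
        _ ≤ η * √c * √p := by
          rwa [← abs_sub_eq_abs_sqrt_sub_mul hp hq, mul_assoc, mul_comm √c, ← hmax]
    calc (√p - √q) ^ 2 = |√p - √q| ^ 2 := (sq_abs _).symm
      _ ≤ (η * √c) ^ 2 := by gcongr
      _ = η * (η * c) := by rw [mul_pow, Real.sq_sqrt hc.le]; ring
      _ ≤ η * c := by gcongr; exact mul_le_of_le_one_left hc.le hη1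

lemma hellingerSq_le_card_mul {p q : ι → ℝ} {c η : ℝ} (hp : ∀ i, 0 ≤ p i) (hq : ∀ i, 0 ≤ q i)
    (hc : 0 < c) (hη0 : 0 ≤ η) (hη1 : η ≤ 1)
    (h : ∀ i, |p i - q i| ≤ η * max √(p i * c) c) :
    hellingerSq p q ≤ Fintype.card ι * (η * c) :=
  (sum_le_sum fun i _ => sq_sqrt_sub_sqrt_le (hp i) (hq i) hc hη0 hη1 (h i)).trans (by simp)

lemma one_sub_sum_min_le {μ μ' : ι → ℝ} {δ : ℝ} (hμ : ∑ i, μ i = 1)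
    (h : ∀ i, |μ i - μ' i| ≤ δ) :
    1 - ∑ i, min (μ i) (μ' i) ≤ Fintype.card ι * δ := by
  have hmin (i : ι) : μ i - min (μ i) (μ' i) ≤ δ := by
    have hi := abs_le.1 (h i)
    rcases min_choice (μ i) (μ' i) with e | e <;> rw [e] <;> linarith
  calc 1 - ∑ i, min (μ i) (μ' i) = ∑ i, (μ i - min (μ i) (μ' i)) := by
        rw [sum_sub_distrib, hμ]
    _ ≤ Fintype.card ι * δ := (sum_le_sum fun i _ => hmin i).trans (by simp)

end Hellinger

section RewardDistribution

lemma integral_sq_le_integral_of_mem_Icc {Ω : Type*} [MeasurableSpace Ω] {μ : Measure Ω}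
    {X : Ω → ℝ} (hX : Integrable X μ) (h : ∀ᵐ ω ∂μ, X ω ∈ Set.Icc (0 : ℝ) 1) :
    ∫ ω, X ω ^ 2 ∂μ ≤ ∫ ω, X ω ∂μ := by
  refine integral_mono_of_nonneg (.of_forall fun ω => sq_nonneg (X ω)) hX ?_
  filter_upwards [h] with ω hω
  exact pow_le_of_le_one hω.1 hω.2 two_ne_zero

lemma sum_integral_le_of_ae_pi {ι : Type*} [Fintype ι] {R : ι → Measure ℝ}
    [∀ i, IsProbabilityMeasure (R i)] (hR : ∀ i, Integrable (fun x => x) (R i)) {b : ℝ}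
    (h : ∀ᵐ x ∂Measure.pi R, ∑ i, x i ≤ b) : ∑ i, ∫ x, x ∂(R i) ≤ b := by
  have hint (i : ι) : Integrable (fun x : ι → ℝ => x i) (Measure.pi R) :=
    integrable_comp_eval (μ := R) (f := fun y : ℝ => y) (hR i)
  calc ∑ i, ∫ x, x ∂(R i) = ∑ i, ∫ x : ι → ℝ, x i ∂Measure.pi R :=
        sum_congr rfl fun i _ =>
          (integral_comp_eval (μ := R) (f := fun y : ℝ => y) (hR i).aestronglyMeasurable).symm
    _ = ∫ x : ι → ℝ, ∑ i, x i ∂Measure.pi R := (integral_finsetSum _ fun i _ => hint i).symm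
    _ ≤ ∫ _ : ι → ℝ, b ∂Measure.pi R :=
        integral_mono_ae (integrable_finsetSum _ fun i _ => hint i) (integrable_const b) h
    _ = b := by simp

end RewardDistribution

section Trajectories

variable {S A : Type}

lemma eqOn_extT_snoc {k : ℕ} (T : Fin (k + 1) → S) (s : S) :
    Set.EqOn (extT (k + 1) (Fin.snoc (α := fun _ => S) T s)) (extT k T) (Set.Iic k) := by
  intro n (hn : n ≤ k)
  have hmin : min n (k + 1) = min n k := by omega
  simp [extT, Fin.snoc, hmin, hn]

lemma extT_snoc_last {k : ℕ} (T : Fin (k + 1) → S) (s : S) :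
    extT (k + 1) (Fin.snoc (α := fun _ => S) T s) (k + 1) = s := by
  simp [extT, Fin.snoc]

lemma sum_fin_snoc [Fintype S] {M : Type*} [AddCommMonoid M] (k : ℕ)
    (F : (Fin (k + 1) → S) → M) :
    ∑ T, F T = ∑ T : Fin k → S, ∑ s, F (Fin.snoc (α := fun _ => S) T s) := by
  rw [← (Fin.snocEquiv fun _ : Fin (k + 1) => S).sum_comp, Fintype.sum_prod_type_right]
  rfl

section TrajectoryProbability

variable (μ : S → ℝ) (P : S → A → S → ℝ) (π : ℕ → S → A)

lemma dependsOn_trajP (k : ℕ) : DependsOn (trajP μ P π k) (Set.Iic k) := by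
  intro f g h
  unfold trajP
  rw [h 0 (Nat.zero_le k)]
  refine congrArg _ (prod_congr rfl fun i hi => ?_)
  have hik := mem_range.1 hi
  rw [h i hik.le, h (i + 1) hik]

lemma trajP_extT_snoc (k : ℕ) (T : Fin (k + 1) → S) (s : S) :
    trajP μ P π (k + 1) (extT (k + 1) (Fin.snoc (α := fun _ => S) T s)) =
      trajP μ P π k (extT k T) * P (extT k T k) (π k (extT k T k)) s := by
  rw [← dependsOn_trajP μ P π k (eqOn_extT_snoc T s), trajP, prod_range_succ, extT_snoc_last,
    eqOn_extT_snoc T s (Set.mem_Iic.2 le_rfl), ← mul_assoc, ← trajP]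

variable {μ P}

lemma trajP_nonneg (hμ : ∀ s, 0 ≤ μ s) (hP : ∀ s a s', 0 ≤ P s a s') (k : ℕ) (f : ℕ → S) :
    0 ≤ trajP μ P π k f :=
  mul_nonneg (hμ _) (prod_nonneg fun _ _ => hP _ _ _)

lemma trajP_le_trajP {ν : S → ℝ} (hν : ∀ s, ν s ≤ μ s) (hP : ∀ s a s', 0 ≤ P s a s') (k : ℕ)
    (f : ℕ → S) : trajP ν P π k f ≤ trajP μ P π k f :=
  mul_le_mul_of_nonneg_right (hν _) (prod_nonneg fun _ _ => hP _ _ _)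

variable [Fintype S]

lemma sum_trajP (hP : ∀ s a, ∑ s', P s a s' = 1) (k : ℕ) :
    ∑ T : Fin (k + 1) → S, trajP μ P π k (extT k T) = ∑ s, μ s := by
  induction k with
  | zero => exact Fintype.sum_equiv (Equiv.funUnique (Fin 1) S) _ _ fun T => by simp [trajP, extT]
  | succ k ih =>
    rw [sum_fin_snoc, ← ih]
    simp_rw [trajP_extT_snoc, ← mul_sum, hP, mul_one]

end TrajectoryProbability

section RestrictedLaw

/-- The law of the first `k` steps of the trajectory, restricted to the event `E`: trajectories
outside `E` get weight `0`. -/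
noncomputable def trajPOn (μ : S → ℝ) (P : S → A → S → ℝ) (π : ℕ → S → A) (k : ℕ)
    (E : Set (ℕ → S)) (T : Fin (k + 1) → S) : ℝ :=
  E.indicator (trajP μ P π k) (extT k T)

variable {μ : S → ℝ} {P Q : S → A → S → ℝ} (π : ℕ → S → A)

lemma trajPOn_nonneg (hμ : ∀ s, 0 ≤ μ s) (hP : ∀ s a s', 0 ≤ P s a s') (k : ℕ)
    (E : Set (ℕ → S)) (T : Fin (k + 1) → S) : 0 ≤ trajPOn μ P π k E T :=
  Set.indicator_nonneg (fun f _ => trajP_nonneg π hμ hP k f) _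

lemma trajPOn_le_trajP (hμ : ∀ s, 0 ≤ μ s) (hP : ∀ s a s', 0 ≤ P s a s') (k : ℕ)
    (E : Set (ℕ → S)) (T : Fin (k + 1) → S) : trajPOn μ P π k E T ≤ trajP μ P π k (extT k T) :=
  Set.indicator_le_self' (fun f _ => trajP_nonneg π hμ hP k f) _

lemma trajPOn_snoc (μ : S → ℝ) (P : S → A → S → ℝ) {k : ℕ} {E : Set (ℕ → S)}
    (hE : DependsOn (· ∈ E) (Set.Iic k)) (T : Fin (k + 1) → S) (s : S) :
    trajPOn μ P π (k + 1) E (Fin.snoc (α := fun _ => S) T s) =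
      trajPOn μ P π k E T * P (extT k T k) (π k (extT k T k)) s := by
  classical
  have hiff : (extT (k + 1) (Fin.snoc (α := fun _ => S) T s) ∈ E) = (extT k T ∈ E) :=
    hE (eqOn_extT_snoc T s)
  simp only [trajPOn, Set.indicator_apply, hiff, trajP_extT_snoc, ite_mul, zero_mul]

lemma hellingerSq_trajPOn_mono [Fintype S] (k : ℕ) {E F : Set (ℕ → S)} (hEF : E ⊆ F) :
    hellingerSq (trajPOn μ P π k E) (trajPOn μ Q π k E) ≤
      hellingerSq (trajPOn μ P π k F) (trajPOn μ Q π k F) := by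
  refine sum_le_sum fun T _ => ?_
  by_cases hT : extT k T ∈ E
  · simp [trajPOn, hT, hEF hT]
  · simpa [trajPOn, hT] using sq_nonneg _

lemma sum_trajPOn_quantNS_lt_lt [Fintype S] (H : ℕ) (X : (ℕ → S) → ℝ) {d : ℝ} (hd : 0 < d) :
    ∑ T, trajPOn μ P π H {f | quantNS μ P π H X d < X f} T < d := by
  by_contra! hle
  have hne : (univ.filter fun T : Fin (H + 1) → S =>
      quantNS μ P π H X d < X (extT H T)).Nonempty := by
    obtain ⟨T, -, hT⟩ := exists_ne_zero_of_sum_ne_zero (hd.trans_le hle).ne'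
    have hmem : extT H T ∈ {f | quantNS μ P π H X d < X f} := Set.mem_of_indicator_ne_zero hT
    exact ⟨T, mem_filter.2 ⟨mem_univ T, hmem⟩⟩
  -- The smallest value of `X` above the quantile would belong to the set defining the quantile.
  obtain ⟨T₀, hT₀, hmin⟩ := exists_min_image _ (fun T => X (extT H T)) hne
  have hT₀ := (mem_filter.1 hT₀).2
  have hiff (T : Fin (H + 1) → S) :
      X (extT H T₀) ≤ X (extT H T) ↔ quantNS μ P π H X d < X (extT H T) :=
    ⟨hT₀.trans_le, fun hT => hmin T (mem_filter.2 ⟨mem_univ T, hT⟩)⟩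
  obtain ⟨B, hB⟩ := (Set.finite_range fun T : Fin (H + 1) → S => X (extT H T)).bddAbove
  refine hT₀.not_ge (le_csSup ⟨B, fun x hx => ?_⟩ ?_)
  · by_contra! hBx
    have hlt (T : Fin (H + 1) → S) : ¬ x ≤ X (extT H T) :=
      ((hB (Set.mem_range_self T)).trans_lt hBx).not_ge
    simp only [Set.mem_ofPred_eq, hlt, if_false, sum_const_zero] at hx
    exact hd.not_ge hx
  · simp only [Set.mem_ofPred_eq, hiff]
    simpa only [trajPOn, Set.indicator_apply, Set.mem_ofPred_eq] using hle

end RestrictedLaw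

/-- The cumulative cost (or reward) `∑_{h<k} c(s_h, a_h)` along a trajectory under `π`. -/
def pathSum (π : ℕ → S → A) (c : S → A → ℝ) (k : ℕ) (f : ℕ → S) : ℝ :=
  ∑ h ∈ range k, c (f h) (π h (f h))

/-- The cumulative cost stopped at the first time at which the events `E` fail. The cost of step `j`
counts on `E (j + 1)`, which in applications is decided by the states `s_0, …, s_j`. -/
noncomputable def stoppedPathSum (π : ℕ → S → A) (c : S → A → ℝ) (E : ℕ → Set (ℕ → S)) (k : ℕ)
    (f : ℕ → S) : ℝ :=
  ∑ j ∈ range k, (E (j + 1)).indicator (fun g => c (g j) (π j (g j))) f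

section PathSums

variable (π : ℕ → S → A) {c : S → A → ℝ} {E : ℕ → Set (ℕ → S)}

lemma pathSum_nonneg (hc : ∀ s a, 0 ≤ c s a) (k : ℕ) (f : ℕ → S) : 0 ≤ pathSum π c k f :=
  sum_nonneg fun _ _ => hc _ _

lemma stoppedPathSum_le_pathSum (hc : ∀ s a, 0 ≤ c s a) (k : ℕ) (f : ℕ → S) :
    stoppedPathSum π c E k f ≤ pathSum π c k f :=
  sum_le_sum fun _ _ => Set.indicator_le_self' (fun _ _ => hc _ _) _

lemma stoppedPathSum_extT_snoc (c : S → A → ℝ)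
    (hE : ∀ j, DependsOn (· ∈ E (j + 1)) (Set.Iic j)) (k : ℕ) (T : Fin (k + 1) → S) (s : S) :
    stoppedPathSum π c E (k + 1) (extT (k + 1) (Fin.snoc (α := fun _ => S) T s)) =
      stoppedPathSum π c E (k + 1) (extT k T) := by
  classical
  refine sum_congr rfl fun j hj => ?_
  have hjk : j ≤ k := Nat.lt_succ_iff.1 (mem_range.1 hj)
  have hiff : (extT (k + 1) (Fin.snoc (α := fun _ => S) T s) ∈ E (j + 1)) =
      (extT k T ∈ E (j + 1)) :=
    hE j fun i hi => eqOn_extT_snoc T s (le_trans hi hjk)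
  simp only [Set.indicator_apply, hiff, eqOn_extT_snoc T s hjk]

lemma pathSum_integral_le_of_ae_pi {R : S → A → Measure ℝ}
    [∀ s a, IsProbabilityMeasure (R s a)] (hR : ∀ s a, Integrable (fun x => x) (R s a)) {H : ℕ}
    {f : ℕ → S} {b : ℝ}
    (h : ∀ᵐ rew ∂Measure.pi fun h : Fin H => R (f h) (π h (f h)), ∑ h, rew h ≤ b) :
    pathSum π (fun s a => ∫ x, x ∂(R s a)) H f ≤ b := by
  rw [pathSum, sum_range]
  exact sum_integral_le_of_ae_pi (fun h => hR _ _) h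

end PathSums

section Tensorization

variable [Fintype S] {ν : S → ℝ} {P Q : S → A → S → ℝ} {E : ℕ → Set (ℕ → S)}

lemma hellingerSq_trajPOn_succ_le (hν : ∀ s, 0 ≤ ν s) (hP : ∀ s a, P s a ∈ stdSimplex ℝ S)
    (hQ : ∀ s a, Q s a ∈ stdSimplex ℝ S) (π : ℕ → S → A) (k : ℕ) {F : Set (ℕ → S)}
    (hF : DependsOn (· ∈ F) (Set.Iic k)) :
    hellingerSq (trajPOn ν P π (k + 1) F) (trajPOn ν Q π (k + 1) F) ≤
      hellingerSq (trajPOn ν P π k F) (trajPOn ν Q π k F) +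
      ∑ T : Fin (k + 1) → S, (trajP ν P π k (extT k T) + trajP ν Q π k (extT k T)) / 2 *
        F.indicator (fun f => hellingerSq (P (f k) (π k (f k))) (Q (f k) (π k (f k))))
          (extT k T) := by
  rw [hellingerSq, hellingerSq, sum_fin_snoc, ← sum_add_distrib]
  refine sum_le_sum fun T _ => ?_
  have hx := trajPOn_nonneg π hν (fun s a => (hP s a).1) k F T
  have hy := trajPOn_nonneg π hν (fun s a => (hQ s a).1) k F T
  simp_rw [trajPOn_snoc π _ _ hF]
  refine (hellingerSq_const_mul (hP _ _) (hQ _ _) hx hy).trans_le (add_le_add_right ?_ _)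
  by_cases hT : extT k T ∈ F
  · rw [Set.indicator_of_mem hT]
    refine mul_le_mul_of_nonneg_right ?_ (hellingerSq_nonneg _ _)
    simpa [trajPOn, hT] using sqrt_mul_sqrt_le_add_div_two hx hy
  · simp [trajPOn, hT]

lemma hellingerSq_trajPOn_le_sum (hν : ∀ s, 0 ≤ ν s) (hP : ∀ s a, P s a ∈ stdSimplex ℝ S)
    (hQ : ∀ s a, Q s a ∈ stdSimplex ℝ S) (π : ℕ → S → A) (hEanti : Antitone E)
    (hE : ∀ j, DependsOn (· ∈ E (j + 1)) (Set.Iic j)) (k : ℕ) :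
    hellingerSq (trajPOn ν P π k (E k)) (trajPOn ν Q π k (E k)) ≤
      ∑ T : Fin (k + 1) → S, (trajP ν P π k (extT k T) + trajP ν Q π k (extT k T)) / 2 *
        stoppedPathSum π (fun s a => hellingerSq (P s a) (Q s a)) E k (extT k T) := by
  induction k with
  | zero =>
    have htraj : trajP ν P π 0 = trajP ν Q π 0 := by funext f; simp [trajP]
    simp [hellingerSq, trajPOn, htraj, stoppedPathSum]
  | succ k ih =>
    have haverage (T : Fin (k + 1) → S) (x y r : ℝ) :
        ∑ s, (x * P (extT k T k) (π k (extT k T k)) s +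
          y * Q (extT k T k) (π k (extT k T k)) s) / 2 * r = (x + y) / 2 * r := by
      rw [← sum_mul, ← sum_div, sum_add_distrib, ← mul_sum, ← mul_sum, (hP _ _).2, (hQ _ _).2,
        mul_one, mul_one]
    simp_rw [sum_fin_snoc (k + 1) (fun _ => _ * stoppedPathSum _ _ _ _ _), trajP_extT_snoc,
      stoppedPathSum_extT_snoc π _ hE, haverage, stoppedPathSum, sum_range_succ, mul_add,
      sum_add_distrib]
    refine (hellingerSq_trajPOn_succ_le hν hP hQ π k (hE k)).trans (add_le_add_left ?_ _)
    exact (hellingerSq_trajPOn_mono π k (hEanti k.le_succ)).trans ih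

lemma hellingerSq_trajPOn_le (hν : ∀ s, 0 ≤ ν s) (hP : ∀ s a, P s a ∈ stdSimplex ℝ S)
    (hQ : ∀ s a, Q s a ∈ stdSimplex ℝ S) (π : ℕ → S → A) (hEanti : Antitone E)
    (hE : ∀ j, DependsOn (· ∈ E (j + 1)) (Set.Iic j)) (k : ℕ) {b : ℝ}
    (hb : ∀ f, stoppedPathSum π (fun s a => hellingerSq (P s a) (Q s a)) E k f ≤ b) :
    hellingerSq (trajPOn ν P π k (E k)) (trajPOn ν Q π k (E k)) ≤ (∑ s, ν s) * b := by
  refine (hellingerSq_trajPOn_le_sum hν hP hQ π hEanti hE k).trans ?_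
  calc _ ≤ ∑ T : Fin (k + 1) → S,
        (trajP ν P π k (extT k T) + trajP ν Q π k (extT k T)) / 2 * b := by
        gcongr
        · linarith [trajP_nonneg π hν (fun s a => (hP s a).1) k (extT k T),
            trajP_nonneg π hν (fun s a => (hQ s a).1) k (extT k T)]
        · exact hb _
    _ = (∑ s, ν s) * b := by
        rw [← sum_mul, ← sum_div, sum_add_distrib, sum_trajP π fun s a => (hP s a).2,
          sum_trajP π fun s a => (hQ s a).2, add_self_div_two]

lemma sum_abs_trajPOn_sub_le (hν : ∀ s, 0 ≤ ν s) (hν1 : ∑ s, ν s ≤ 1)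
    (hP : ∀ s a, P s a ∈ stdSimplex ℝ S) (hQ : ∀ s a, Q s a ∈ stdSimplex ℝ S) (π : ℕ → S → A)
    (hEanti : Antitone E) (hE : ∀ j, DependsOn (· ∈ E (j + 1)) (Set.Iic j)) (k : ℕ) {b : ℝ}
    (hb0 : 0 ≤ b)
    (hb : ∀ f, stoppedPathSum π (fun s a => hellingerSq (P s a) (Q s a)) E k f ≤ b) :
    ∑ T, |trajPOn ν P π k (E k) T - trajPOn ν Q π k (E k) T| ≤ 2 * √b := by
  have hP0 := fun s a => (hP s a).1
  have hQ0 := fun s a => (hQ s a).1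
  have hmass {P' : S → A → S → ℝ} (hP' : ∀ s a, P' s a ∈ stdSimplex ℝ S) :
      ∑ T, trajPOn ν P' π k (E k) T ≤ 1 :=
    (sum_le_sum fun T _ => trajPOn_le_trajP π hν (fun s a => (hP' s a).1) k (E k) T).trans
      ((sum_trajP π (fun s a => (hP' s a).2) k).trans_le hν1)
  calc ∑ T, |trajPOn ν P π k (E k) T - trajPOn ν Q π k (E k) T|
      ≤ √(hellingerSq (trajPOn ν P π k (E k)) (trajPOn ν Q π k (E k))) *
          √(2 * (∑ T, trajPOn ν P π k (E k) T + ∑ T, trajPOn ν Q π k (E k) T)) :=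
        sum_abs_sub_le_sqrt_hellingerSq (trajPOn_nonneg π hν hP0 k _) (trajPOn_nonneg π hν hQ0 k _)
    _ ≤ √b * √(2 ^ 2) := by
        gcongr
        · exact (hellingerSq_trajPOn_le hν hP hQ π hEanti hE k hb).trans
            (mul_le_of_le_one_left hb0 hν1)
        · linarith [hmass hP, hmass hQ]
    _ = 2 * √b := by rw [Real.sqrt_sq zero_le_two, mul_comm]

end Tensorization

section Budget

variable [DecidableEq S] [DecidableEq A] (π : ℕ → S → A)

lemma dependsOn_nVisits (k : ℕ) (z : S × A) : DependsOn (nVisits π k z) (Set.Iio k) :=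
  fun _ _ h => sum_congr rfl fun i hi => by rw [h i (mem_range.1 hi)]

lemma monotone_nVisits (z : S × A) (f : ℕ → S) : Monotone fun k => nVisits π k z f :=
  fun _ _ hjk => sum_le_sum_of_subset (range_subset_range.2 hjk)

/-- The event that each pair `(s, a)` is visited at most `m s a` times in the first `k` steps. -/
def withinBudget (m : S → A → ℝ) (k : ℕ) : Set (ℕ → S) :=
  {f | ∀ s a, (nVisits π k (s, a) f : ℝ) ≤ m s a}

lemma antitone_withinBudget (m : S → A → ℝ) : Antitone (withinBudget π m) :=
  fun _ _ hjk f hf s a => (Nat.cast_le.2 (monotone_nVisits π (s, a) f hjk)).trans (hf s a)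

-- Whether step `j` keeps the budget is decided by `s_j`, as the policy is deterministic.
lemma dependsOn_withinBudget (m : S → A → ℝ) (j : ℕ) :
    DependsOn (· ∈ withinBudget π m (j + 1)) (Set.Iic j) := by
  intro f g h
  have hvisits (z : S × A) : nVisits π (j + 1) z f = nVisits π (j + 1) z g :=
    dependsOn_nVisits π (j + 1) z fun i hi => h i (Nat.lt_succ_iff.1 hi)
  simp only [withinBudget, Set.mem_ofPred_eq, hvisits]

lemma nVisits_mul_le_pathSum {c : S → A → ℝ} (hc : ∀ s a, 0 ≤ c s a) (k : ℕ) (f : ℕ → S) (s : S)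
    (a : A) : (nVisits π k (s, a) f : ℝ) * c s a ≤ pathSum π c k f := by
  rw [nVisits, Nat.cast_sum, sum_mul]
  refine sum_le_sum fun h _ => ?_
  split_ifs with hsa
  · obtain ⟨rfl, rfl⟩ := Prod.mk.inj hsa
    simp
  · simpa using hc _ _

variable [Fintype S] [Fintype A]

lemma pathSum_eq_sum_nVisits (c : S → A → ℝ) (k : ℕ) (f : ℕ → S) :
    pathSum π c k f = ∑ z : S × A, (nVisits π k z f : ℝ) * c z.1 z.2 := by
  simp_rw [nVisits, Nat.cast_sum, sum_mul]
  rw [sum_comm]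
  simp [pathSum]

variable {π} {c : S → A → ℝ} {k : ℕ} {f : ℕ → S}

lemma pathSum_le_card_mul {b : ℝ} (hb : 0 ≤ b)
    (h : ∀ s a, 1 ≤ (nVisits π k (s, a) f : ℝ) → nVisits π k (s, a) f * c s a ≤ b) :
    pathSum π c k f ≤ Fintype.card (S × A) * b := by
  have hpair (z : S × A) : nVisits π k z f * c z.1 z.2 ≤ b := by
    rcases Nat.eq_zero_or_pos (nVisits π k z f) with hz | hz
    · simpa [hz] using hb
    · exact h z.1 z.2 (Nat.one_le_cast.2 hz)
  rw [pathSum_eq_sum_nVisits]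
  exact (sum_le_sum fun z _ => hpair z).trans (by simp)

variable {m : S → A → ℝ}

lemma stoppedPathSum_withinBudget_le (π : ℕ → S → A) {b : ℝ} (hb : 0 ≤ b)
    (hc : ∀ s a, 0 ≤ c s a) (hm : ∀ s a, 1 ≤ m s a → m s a * c s a ≤ b) (k : ℕ) (f : ℕ → S) :
    stoppedPathSum π c (withinBudget π m) k f ≤ Fintype.card (S × A) * b := by
  induction k with
  | zero => simp only [stoppedPathSum, range_zero, sum_empty]; positivity
  | succ k ih =>
    by_cases hf : f ∈ withinBudget π m (k + 1)
    · refine (stoppedPathSum_le_pathSum π hc (k + 1) f).trans (pathSum_le_card_mul hb ?_)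
      intro s a hn
      exact (mul_le_mul_of_nonneg_right (hf s a) (hc s a)).trans (hm s a (hn.trans (hf s a)))
    · rwa [stoppedPathSum, sum_range_succ, Set.indicator_of_notMem hf, add_zero]

lemma sum_trajPOn_compl_withinBudget_le {μ : S → ℝ} {P : S → A → S → ℝ} (hμ : ∀ s, 0 ≤ μ s)
    (hP : ∀ s a s', 0 ≤ P s a s') {d : ℝ}
    (hm : ∀ s a, ∑ T, trajPOn μ P π k {f | m s a < nVisits π k (s, a) f} T ≤ d) :
    ∑ T, trajPOn μ P π k (withinBudget π m k)ᶜ T ≤ Fintype.card (S × A) * d := by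
  calc ∑ T, trajPOn μ P π k (withinBudget π m k)ᶜ T
      ≤ ∑ T, ∑ z : S × A, trajPOn μ P π k {f | m z.1 z.2 < nVisits π k z f} T := by
        refine sum_le_sum fun T _ => ?_
        have hnonneg (z : S × A) := trajPOn_nonneg π hμ hP k {f | m z.1 z.2 < nVisits π k z f} T
        by_cases hT : extT k T ∈ withinBudget π m k
        · simpa [trajPOn, hT] using sum_nonneg fun z _ => hnonneg z
        · obtain ⟨s, a, hsa⟩ : ∃ s a, m s a < nVisits π k (s, a) (extT k T) := by
            simpa [withinBudget] using hT
          refine le_trans ?_ (single_le_sum (fun z _ => hnonneg z) (mem_univ (s, a)))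
          simp [trajPOn, hT, hsa]
    _ = ∑ z : S × A, ∑ T, trajPOn μ P π k {f | m z.1 z.2 < nVisits π k z f} T := sum_comm
    _ ≤ Fintype.card (S × A) * d := (sum_le_sum fun z _ => hm z.1 z.2).trans (by simp)

lemma max_sqrt_div_le_one_div {q m n : ℝ} (hn : 0 < n) (hnm : n ≤ m) (hq0 : 0 ≤ q)
    (hq : n * q ≤ 1) : max √(q / m) (1 / m) ≤ 1 / n := by
  refine max_le ((Real.sqrt_le_left (by positivity)).2 ?_) (one_div_le_one_div_of_le hn hnm)
  calc q / m ≤ q / n := div_le_div_of_nonneg_left hq0 hn hnm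
    _ = n * q * (1 / n) ^ 2 := by field_simp
    _ ≤ (1 / n) ^ 2 := mul_le_of_le_one_left (by positivity) hq

lemma pathSum_sub_le_of_mem_withinBudget {r r' q : S → A → ℝ} {κ : ℝ} (hκ : 0 ≤ κ)
    (hf : f ∈ withinBudget π m k) (hq0 : ∀ s a, 0 ≤ q s a) (hqr : ∀ s a, q s a ≤ r s a)
    (hr1 : pathSum π r k f ≤ 1)
    (hclose : ∀ s a, 1 ≤ m s a → |r' s a - r s a| ≤ κ * max √(q s a / m s a) (1 / m s a)) :
    pathSum π r k f - Fintype.card (S × A) * κ ≤ pathSum π r' k f := by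
  have hdiff : pathSum π (fun s a => r s a - r' s a) k f ≤ Fintype.card (S × A) * κ := by
    refine pathSum_le_card_mul hκ fun s a hn => ?_
    have hn0 : (0 : ℝ) < nVisits π k (s, a) f := zero_lt_one.trans_le hn
    have hnq : nVisits π k (s, a) f * q s a ≤ 1 :=
      calc nVisits π k (s, a) f * q s a ≤ nVisits π k (s, a) f * r s a := by gcongr; exact hqr s a
        _ ≤ pathSum π r k f :=
          nVisits_mul_le_pathSum π (fun s a => (hq0 s a).trans (hqr s a)) k f s a
        _ ≤ 1 := hr1
    calc nVisits π k (s, a) f * (r s a - r' s a)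
        ≤ nVisits π k (s, a) f * (κ * max √(q s a / m s a) (1 / m s a)) := by
          gcongr
          linarith [(abs_le.1 (hclose s a (hn.trans (hf s a)))).1]
      _ ≤ nVisits π k (s, a) f * (κ * (1 / nVisits π k (s, a) f)) := by
          gcongr
          exact max_sqrt_div_le_one_div hn0 (hf s a) (hq0 s a) hnq
      _ = κ := by field_simp
  have hsub : pathSum π (fun s a => r s a - r' s a) k f = pathSum π r k f - pathSum π r' k f :=
    sum_sub_distrib _ _
  linarith

end Budget

section Value

variable [Fintype S] {μ μ' ν : S → ℝ} {P Q : S → A → S → ℝ} {r r' : S → A → ℝ} {π : ℕ → S → A}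
  {H : ℕ}

lemma valNS_eq_sum_trajP_mul_pathSum (μ : S → ℝ) (P : S → A → S → ℝ) (r : S → A → ℝ)
    (π : ℕ → S → A) (H : ℕ) :
    valNS μ P r π H =
      ∑ T : Fin (H + 1) → S, trajP μ P π H (extT H T) * pathSum π r H (extT H T) :=
  rfl

lemma valNS_nonneg (hμ : ∀ s, 0 ≤ μ s) (hP : ∀ s a s', 0 ≤ P s a s') (hr : ∀ s a, 0 ≤ r s a) :
    0 ≤ valNS μ P r π H :=
  sum_nonneg fun _ _ => mul_nonneg (trajP_nonneg π hμ hP H _) (pathSum_nonneg π hr H _)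

lemma valNS_le_one (hμ : μ ∈ stdSimplex ℝ S) (hP : ∀ s a, P s a ∈ stdSimplex ℝ S)
    (hr : ∀ T : Fin (H + 1) → S, 0 < trajP μ P π H (extT H T) → pathSum π r H (extT H T) ≤ 1) :
    valNS μ P r π H ≤ 1 := by
  rw [valNS_eq_sum_trajP_mul_pathSum, ← hμ.2, ← sum_trajP π (fun s a => (hP s a).2) H]
  refine sum_le_sum fun T _ => ?_
  have hp := trajP_nonneg π hμ.1 (fun s a => (hP s a).1) H (extT H T)
  rcases hp.eq_or_lt with hp0 | hp0
  · simp [← hp0]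
  · exact mul_le_of_le_one_right hp (hr T hp0)

lemma mul_sub_mul_le_of_le {p q p' q' G G' δ : ℝ} (hp : p' ≤ p) (hq0 : 0 ≤ q') (hq : q' ≤ q)
    (hG0 : 0 ≤ G) (hG1 : G ≤ 1) (hG' : 0 ≤ G') (hGG' : G - δ ≤ G') :
    p * G - q * G' ≤ (p - p') + δ * q' + |p' - q'| := by
  have hinit : (p - p') * G ≤ p - p' := mul_le_of_le_one_right (sub_nonneg.2 hp) hG1
  have htrans : (p' - q') * G ≤ |p' - q'| :=
    (mul_le_mul_of_nonneg_right (le_abs_self _) hG0).trans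
      (mul_le_of_le_one_right (abs_nonneg _) hG1)
  have hreward : q' * (G - δ) ≤ q * G' :=
    (mul_le_mul_of_nonneg_left hGG' hq0).trans (mul_le_mul_of_nonneg_right hq hG')
  linarith

lemma valNS_sub_valNS_le (hν : ∀ s, 0 ≤ ν s) (hν1 : ∑ s, ν s ≤ 1) (hνμ : ∀ s, ν s ≤ μ s)
    (hνμ' : ∀ s, ν s ≤ μ' s) (hP : ∀ s a, P s a ∈ stdSimplex ℝ S)
    (hQ : ∀ s a, Q s a ∈ stdSimplex ℝ S) (hr0 : ∀ s a, 0 ≤ r s a) (hr'0 : ∀ s a, 0 ≤ r' s a)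
    (hr : ∀ T : Fin (H + 1) → S, 0 < trajP μ P π H (extT H T) → pathSum π r H (extT H T) ≤ 1)
    (E : Set (ℕ → S)) {δ : ℝ} (hδ : 0 ≤ δ)
    (hE : ∀ T : Fin (H + 1) → S, 0 < trajP μ P π H (extT H T) → extT H T ∈ E →
      pathSum π r H (extT H T) - δ ≤ pathSum π r' H (extT H T)) :
    valNS μ P r π H - valNS μ' Q r' π H ≤
      (∑ s, μ s - ∑ s, ν s) + ∑ T, trajPOn μ P π H Eᶜ T + δ +
        ∑ T, |trajPOn ν P π H E T - trajPOn ν Q π H E T| := by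
  have hP0 := fun s a => (hP s a).1
  have hQ0 := fun s a => (hQ s a).1
  have hpoint (T : Fin (H + 1) → S) :
      trajP μ P π H (extT H T) * pathSum π r H (extT H T) -
        trajP μ' Q π H (extT H T) * pathSum π r' H (extT H T) ≤
      (trajP μ P π H (extT H T) - trajP ν P π H (extT H T)) + trajPOn μ P π H Eᶜ T +
        δ * trajP ν Q π H (extT H T) + |trajPOn ν P π H E T - trajPOn ν Q π H E T| := by
    have hp := trajP_nonneg π (fun s => (hν s).trans (hνμ s)) hP0 H (extT H T)
    have hpν := trajP_le_trajP π hνμ hP0 H (extT H T)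
    have hqν := trajP_le_trajP π hνμ' hQ0 H (extT H T)
    have hqν0 := trajP_nonneg π hν hQ0 H (extT H T)
    have hG' := pathSum_nonneg π hr'0 H (extT H T)
    have hqG' := mul_nonneg (hqν0.trans hqν) hG'
    have hδq := mul_nonneg hδ hqν0
    rcases hp.eq_or_lt with hp0 | hp0
    · have hbad := trajPOn_nonneg π (fun s => (hν s).trans (hνμ s)) hP0 H Eᶜ T
      rw [← hp0] at hpν ⊢
      linarith [abs_nonneg (trajPOn ν P π H E T - trajPOn ν Q π H E T)]
    · by_cases hT : extT H T ∈ E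
      · simpa [trajPOn, hT] using mul_sub_mul_le_of_le hpν hqν0 hqν (pathSum_nonneg π hr0 H _)
          (hr T hp0) hG' (hE T hp0 hT)
      · have hpG := mul_le_of_le_one_right hp (hr T hp0)
        simp only [trajPOn, Set.mem_compl_iff, hT, not_false_eq_true, Set.indicator_of_mem,
          Set.indicator_of_notMem, sub_self, abs_zero]
        linarith
  have htotal := sum_le_sum fun T (_ : T ∈ univ) => hpoint T
  simp only [sum_sub_distrib, sum_add_distrib, ← mul_sum,
    ← valNS_eq_sum_trajP_mul_pathSum] at htotal
  rw [sum_trajP π fun s a => (hP s a).2, sum_trajP π fun s a => (hP s a).2,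
    sum_trajP π fun s a => (hQ s a).2] at htotal
  linarith [mul_le_of_le_one_right hδ hν1]

lemma valNS_sub_valNS_le_of_budget [Fintype A] [DecidableEq S] [DecidableEq A]
    (hμ : μ ∈ stdSimplex ℝ S) (hμ' : ∀ s, 0 ≤ μ' s) (hP : ∀ s a, P s a ∈ stdSimplex ℝ S)
    (hQ : ∀ s a, Q s a ∈ stdSimplex ℝ S) {q : S → A → ℝ} (hq0 : ∀ s a, 0 ≤ q s a)
    (hqr : ∀ s a, q s a ≤ r s a) (hr'0 : ∀ s a, 0 ≤ r' s a)
    (hr : ∀ T : Fin (H + 1) → S, 0 < trajP μ P π H (extT H T) → pathSum π r H (extT H T) ≤ 1)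
    {m : S → A → ℝ} {d δ κ b : ℝ} (hκ : 0 ≤ κ) (hb : 0 ≤ b)
    (hm : ∀ s a, ∑ T, trajPOn μ P π H {f | m s a < nVisits π H (s, a) f} T ≤ d)
    (hμμ' : ∀ s, |μ s - μ' s| ≤ δ)
    (hPQ : ∀ s a, 1 ≤ m s a → m s a * hellingerSq (P s a) (Q s a) ≤ b)
    (hrr' : ∀ s a, 1 ≤ m s a → |r' s a - r s a| ≤ κ * max √(q s a / m s a) (1 / m s a)) :
    valNS μ P r π H - valNS μ' Q r' π H ≤
      Fintype.card S * δ + Fintype.card (S × A) * d + Fintype.card (S × A) * κ +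
        2 * √(Fintype.card (S × A) * b) := by
  have hν0 (s : S) : 0 ≤ min (μ s) (μ' s) := le_min (hμ.1 s) (hμ' s)
  have hν1 : ∑ s, min (μ s) (μ' s) ≤ 1 :=
    (sum_le_sum fun s _ => min_le_left _ _).trans_eq hμ.2
  have hvalue := valNS_sub_valNS_le hν0 hν1 (fun s => min_le_left _ _) (fun s => min_le_right _ _)
    hP hQ (fun s a => (hq0 s a).trans (hqr s a)) hr'0 hr (withinBudget π m H)
    (mul_nonneg (Nat.cast_nonneg (Fintype.card (S × A))) hκ)
    fun T hT hTm => pathSum_sub_le_of_mem_withinBudget hκ hTm hq0 hqr (hr T hT) hrr'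
  have hinit := one_sub_sum_min_le hμ.2 hμμ'
  have hbad := sum_trajPOn_compl_withinBudget_le hμ.1 (fun s a => (hP s a).1) hm
  have htrans := sum_abs_trajPOn_sub_le hν0 hν1 hP hQ π (antitone_withinBudget π m)
    (dependsOn_withinBudget π m) H (by positivity)
    (stoppedPathSum_withinBudget_le π hb (fun s a => hellingerSq_nonneg _ _) hPQ H)
  rw [hμ.2] at hvalue
  linarith

end Value

end Trajectories

lemma mul_hellingerSq_le_of_close {S A : Type*} [Fintype S] [Fintype A] [Nonempty S] [Nonempty A]
    {p q : S → ℝ} {ε m : ℝ} (hε0 : 0 < ε) (hε1 : ε ≤ 1) (hm : 1 ≤ m) (hp : ∀ s, 0 ≤ p s)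
    (hq : ∀ s, 0 ≤ q s)
    (h : ∀ s, |q s - p s| ≤ ε / (96 * (Fintype.card S : ℝ) ^ 2 * Fintype.card A) *
      max √(ε * p s / (72 * m * (Fintype.card S * Fintype.card A)))
        (ε / (72 * m * (Fintype.card S * Fintype.card A)))) :
    m * hellingerSq p q ≤ ε ^ 2 / (6912 * (Fintype.card (S × A) : ℝ) ^ 2) := by
  have hcard : (1 : ℝ) ≤ Fintype.card S * Fintype.card A :=
    one_le_mul_of_one_le_of_one_le (Nat.one_le_cast.2 Fintype.card_pos)
      (Nat.one_le_cast.2 Fintype.card_pos)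
  have hS : (1 : ℝ) ≤ Fintype.card S := Nat.one_le_cast.2 Fintype.card_pos
  set c := ε / (72 * m * (Fintype.card S * Fintype.card A)) with hc
  set η := ε / (96 * (Fintype.card S : ℝ) ^ 2 * Fintype.card A) with hη
  have hη1 : η ≤ 1 := (div_le_one (by positivity)).2 (by nlinarith)
  have hhell : hellingerSq p q ≤ Fintype.card S * (η * c) := by
    refine hellingerSq_le_card_mul hp hq (by positivity) (by positivity) hη1 fun s => ?_
    have hpc : p s * c = ε * p s / (72 * m * (Fintype.card S * Fintype.card A)) := by
      rw [hc, mul_div_assoc', mul_comm]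
    rw [abs_sub_comm, hpc]
    exact h s
  calc m * hellingerSq p q ≤ m * (Fintype.card S * (η * c)) := by gcongr
    _ = ε ^ 2 / (6912 * (Fintype.card (S × A) : ℝ) ^ 2) := by
        rw [Fintype.card_prod, Nat.cast_mul, hη, hc]
        field_simp
        norm_num

lemma total_loss_le {x y ε : ℝ} (hε : 0 < ε) (hx : 1 ≤ x) (hy : 1 ≤ y) :
    x * (ε / (6 * x)) + x * y * (ε / (12 * x * y)) + x * y * (ε / (24 * x * y)) +
      2 * √(x * y * (ε ^ 2 / (6912 * (x * y) ^ 2))) ≤ ε := by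
  have hxy : 1 ≤ x * y := one_le_mul_of_one_le_of_one_le hx hy
  have hsqrt : √(x * y * (ε ^ 2 / (6912 * (x * y) ^ 2))) ≤ ε / 4 := by
    refine (Real.sqrt_le_left (by positivity)).2 ?_
    calc x * y * (ε ^ 2 / (6912 * (x * y) ^ 2)) = ε ^ 2 / (6912 * (x * y)) := by field_simp
      _ ≤ ε ^ 2 / 4 ^ 2 := by gcongr; linarith
      _ = (ε / 4) ^ 2 := (div_pow ..).symm
  have hlinear : x * (ε / (6 * x)) + x * y * (ε / (12 * x * y)) + x * y * (ε / (24 * x * y)) =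
      7 / 24 * ε := by
    field_simp
    norm_num
  linarith

theorem stmt13_general {S A : Type} [Fintype S] [DecidableEq S] [Fintype A] [DecidableEq A]
    {μ μhat : S → ℝ} {P Phat : S → A → S → ℝ} {R : S → A → Measure ℝ}
    [∀ s a, IsProbabilityMeasure (R s a)] {Rhat : S → A → ℝ} {H : ℕ} {π : ℕ → S → A} {ε : ℝ}
    (hε : 0 < ε) (hμ : μ ∈ stdSimplex ℝ S) (hP : ∀ s a, P s a ∈ stdSimplex ℝ S)
    (hR : ∀ s a, ∀ᵐ x ∂(R s a), x ∈ Set.Icc (0 : ℝ) 1) (hμhat : ∀ s, 0 ≤ μhat s)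
    (hPhat : ∀ s a, Phat s a ∈ stdSimplex ℝ S) (hRhat : ∀ s a, 0 ≤ Rhat s a)
    (hBTR : ∀ T : Fin (H + 1) → S, 0 < trajP μ P π H (extT H T) →
      ∀ᵐ rew ∂(Measure.pi fun h : Fin H => R (extT H T h) (π h (extT H T h))),
        ∑ h : Fin H, rew h ≤ 1)
    {mbar : S → A → ℝ}
    (hmbar : ∀ s a, mbar s a =
      quantNS μ P π H (fun f => (nVisits π H (s, a) f : ℝ))
        (ε / (12 * (Fintype.card S : ℝ) * (Fintype.card A : ℝ))))
    (hPclose : ∀ s a s', 1 ≤ mbar s a →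
      |Phat s a s' - P s a s'| ≤
        ε / (96 * (Fintype.card S : ℝ) ^ 2 * (Fintype.card A : ℝ)) *
          max √(ε * P s a s' /
                (72 * mbar s a * ((Fintype.card S : ℝ) * (Fintype.card A : ℝ))))
              (ε / (72 * mbar s a * ((Fintype.card S : ℝ) * (Fintype.card A : ℝ)))))
    (hRclose : ∀ s a, 1 ≤ mbar s a →
      |Rhat s a - ∫ x, x ∂(R s a)| ≤
        ε / (24 * (Fintype.card S : ℝ) * (Fintype.card A : ℝ)) *
          max √((∫ x, x ^ 2 ∂(R s a)) / mbar s a) (1 / mbar s a))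
    (hμclose : ∀ s, |μ s - μhat s| ≤ ε / (6 * (Fintype.card S : ℝ))) :
    valNS μ P (fun s a => ∫ x, x ∂(R s a)) π H - ε ≤ valNS μhat Phat Rhat π H := by
  have hRint (s : S) (a : A) : Integrable (fun x => x) (R s a) :=
    .of_mem_Icc 0 1 aemeasurable_id (hR s a)
  have hq0 (s : S) (a : A) : 0 ≤ ∫ x, x ^ 2 ∂(R s a) := integral_nonneg fun x => sq_nonneg x
  have hqr (s : S) (a : A) := integral_sq_le_integral_of_mem_Icc (hRint s a) (hR s a)
  have hr1 (T : Fin (H + 1) → S) (hT : 0 < trajP μ P π H (extT H T)) :=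
    pathSum_integral_le_of_ae_pi π hRint (hBTR T hT)
  rcases le_total 1 ε with hε1 | hε1
  · linarith [valNS_le_one hμ hP hr1,
      valNS_nonneg (π := π) (H := H) hμhat (fun s a => (hPhat s a).1) hRhat]
  · have hS : Nonempty S := by
      by_contra! hS
      simpa using hμ.2
    have hA : Nonempty A := hS.map (π 0)
    have hm (s : S) (a : A) :
        ∑ T, trajPOn μ P π H {f | mbar s a < nVisits π H (s, a) f} T ≤
          ε / (12 * Fintype.card S * Fintype.card A) := by
      rw [hmbar]
      exact (sum_trajPOn_quantNS_lt_lt π H (fun f => (nVisits π H (s, a) f : ℝ)) (by positivity)).le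
    have hloss := valNS_sub_valNS_le_of_budget hμ hμhat hP hPhat hq0 hqr hRhat hr1
      (by positivity) (by positivity) hm hμclose
      (fun s a hmsa => mul_hellingerSq_le_of_close hε hε1 hmsa (hP s a).1 (hPhat s a).1
        (hPclose s a · hmsa)) hRclose
    have htotal := total_loss_le hε (Nat.one_le_cast.2 (Fintype.card_pos (α := S)))
      (Nat.one_le_cast.2 (Fintype.card_pos (α := A)))
    rw [Fintype.card_prod, Nat.cast_mul] at hloss
    linarith

theorem stmt13 {S A : Type} [Fintype S] [DecidableEq S] [Fintype A] [DecidableEq A]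
    (μ μhat : S → ℝ) (P Phat : S → A → S → ℝ)
    (R : S → A → Measure ℝ) [∀ s a, IsProbabilityMeasure (R s a)]
    (Rhat : S → A → ℝ)
    (H : ℕ) (hHpos : 0 < H)
    (π : ℕ → S → A)
    (ε : ℝ) (hε0 : 0 < ε) (hε1 : ε ≤ 1 / 2)
    -- M = (S, A, P, R, H, μ) is an MDP
    (hμ0 : ∀ s, 0 ≤ μ s) (hμ1 : ∑ s, μ s = 1)
    (hP0 : ∀ s a s', 0 ≤ P s a s') (hP1 : ∀ s a, ∑ s', P s a s' = 1)
    (hR01 : ∀ s a, ∀ᵐ x ∂(R s a), x ∈ Set.Icc (0 : ℝ) 1)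
    -- M̂ = (S, A, P̂, R̂, H, μ̂) is an MDP
    (hμh0 : ∀ s, 0 ≤ μhat s) (hμh1 : ∑ s, μhat s = 1)
    (hPh0 : ∀ s a s', 0 ≤ Phat s a s') (hPh1 : ∀ s a, ∑ s', Phat s a s' = 1)
    (hRh01 : ∀ s a, Rhat s a ∈ Set.Icc (0 : ℝ) 1)
    -- M satisfies the bounded total reward assumption
    (hBTR : ∀ (π' : ℕ → S → A) (T : Fin (H + 1) → S), 0 < trajP μ P π' H (extT H T) →
      ∀ᵐ rew ∂(Measure.pi fun h : Fin H =>
          R (extT H T (h : ℕ)) (π' (h : ℕ) (extT H T (h : ℕ)))),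
        (∀ h : Fin H, rew h ∈ Set.Icc (0 : ℝ) 1) ∧ (∑ h : Fin H, rew h) ≤ 1)
    -- m̄(s, a) is the (ε / (12|S||A|))-quantile of the visitation frequency of (s, a) under π
    (mbar : S → A → ℝ)
    (hmbar : ∀ s a, mbar s a =
      quantNS μ P π H (fun f => (nVisits π H (s, a) f : ℝ))
        (ε / (12 * (Fintype.card S : ℝ) * (Fintype.card A : ℝ))))
    -- closeness of the transition probabilities
    (hPclose : ∀ s a s', 1 ≤ mbar s a →
      |Phat s a s' - P s a s'| ≤
        ε / (96 * (Fintype.card S : ℝ) ^ 2 * (Fintype.card A : ℝ)) *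
          max (Real.sqrt (ε * P s a s' /
                (72 * mbar s a * ((Fintype.card S : ℝ) * (Fintype.card A : ℝ)))))
              (ε / (72 * mbar s a * ((Fintype.card S : ℝ) * (Fintype.card A : ℝ)))))
    -- closeness of the mean rewards
    (hRclose : ∀ s a, 1 ≤ mbar s a →
      |Rhat s a - ∫ x, x ∂(R s a)| ≤
        ε / (24 * (Fintype.card S : ℝ) * (Fintype.card A : ℝ)) *
          max (Real.sqrt ((∫ x, x ^ 2 ∂(R s a)) / mbar s a)) (1 / mbar s a))
    -- closeness of the initial state distributions
    (hμclose : ∀ s, |μ s - μhat s| ≤ ε / (6 * (Fintype.card S : ℝ))) :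
    valNS μ P (fun s a => ∫ x, x ∂(R s a)) π H - ε ≤ valNS μhat Phat Rhat π H := by
  exact stmt13_general hε0 ⟨hμ0, hμ1⟩ (fun s a => ⟨hP0 s a, hP1 s a⟩) hR01 hμh0
    (fun s a => ⟨hPh0 s a, hPh1 s a⟩) (fun s a => (hRh01 s a).1)
    (fun T hT => (hBTR π T hT).mono fun _ hrew => hrew.2) hmbar hPclose hRclose hμclose
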